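/- arXiv:1609.07209 — 3 statements merged into one kernel-verified Lean document; each statement's English description precedes it below -/
import Mathlib

section
/- Let F be a totally real number field of degree n over ℚ and let δ > 0. Then the family indexed by the totally positive units η of O_F, whose value at η is the product over those j ∈ {1,…,n} with σ_j(η) < 1 of σ_j(η)^δ, is summable; that is, ∑_{η ∈ O_F^{×+}} ∏_{j : σ_j(η) < 1} σ_j(η)^δ < ∞. -/
open NumberField

lemma aux_place_eq (F : Type*) [Field F] [NumberField F] (σ : F →+* ℝ) (x : F) :
    InfinitePlace.mk (Complex.ofRealHom.comp σ) x = |σ x| := by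
  rw [InfinitePlace.apply]
  simp

lemma aux_bij (F : Type*) [Field F] [NumberField F]
    (htotallyReal : ∀ v : NumberField.InfinitePlace F, v.IsReal) :
    Function.Bijective
      (fun σ : F →+* ℝ => (InfinitePlace.mk (Complex.ofRealHom.comp σ) : InfinitePlace F)) := by
  constructor
  · intro σ τ h
    ext x
    rcases InfinitePlace.mk_eq_iff.mp h with h | h
    · have := RingHom.congr_fun h x
      simpa using this
    · have := RingHom.congr_fun h x
      simpa [ComplexEmbedding.conjugate_coe_eq] using this
  · intro w
    refine ⟨InfinitePlace.embedding_of_isReal (htotallyReal w), ?_⟩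
    have : Complex.ofRealHom.comp (InfinitePlace.embedding_of_isReal (htotallyReal w))
        = w.embedding := by
      ext x
      exact InfinitePlace.embedding_of_isReal_apply (htotallyReal w) x
    simp only [this, InfinitePlace.mk_embedding]

lemma aux_sum {ι : Type*} [Fintype ι] (a : ι → ℝ) (h : ∑ i, a i = 0) (j : ι) :
    |a j| ≤ ∑ i, max (-a i) 0 := by
  have h1 : ∑ i, max (-a i) 0 = ∑ i, max (a i) 0 := by
    rw [← sub_eq_zero, ← Finset.sum_sub_distrib, ← neg_eq_zero, ← Finset.sum_neg_distrib]
    refine Eq.trans ?_ h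
    refine Finset.sum_congr rfl fun i _ => ?_
    rcases le_total (a i) 0 with h | h
    · rw [max_eq_left (by linarith), max_eq_right h]; ring
    · rw [max_eq_right (by linarith), max_eq_left h]; ring
  have h2 : max (-a j) 0 ≤ ∑ i, max (-a i) 0 :=
    Finset.single_le_sum (f := fun i => max (-a i) 0) (fun i _ => le_max_right _ _)
      (Finset.mem_univ j)
  have h3 : max (a j) 0 ≤ ∑ i, max (a i) 0 :=
    Finset.single_le_sum (f := fun i => max (a i) 0) (fun i _ => le_max_right _ _)
      (Finset.mem_univ j)
  rw [abs_le']
  exact ⟨by rw [h1]; exact (le_max_left _ _).trans h3, (le_max_left _ _).trans h2⟩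

lemma aux_term (t δ : ℝ) (ht : 0 < t) (hδ : 0 < δ) :
    (if t < 1 then t ^ δ else 1) = Real.exp (-δ * max (-Real.log t) 0) := by
  split_ifs with h
  · rw [max_eq_left (by linarith [Real.log_neg ht h]), Real.rpow_def_of_pos ht]
    congr 1; ring
  · rw [max_eq_right (by linarith [Real.log_nonneg (not_lt.mp h)])]; simp

lemma aux_exp (t δ : ℝ) (k : ℕ) (ht : 0 < t) (hδ : 0 < δ) :
    Real.exp (-δ * t) ≤ (k.factorial / δ ^ k) * t⁻¹ ^ k := by
  have := Real.pow_div_factorial_le_exp (δ * t) (by positivity) k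
  rw [neg_mul, Real.exp_neg]
  have h2 : (k.factorial / δ ^ k) * t⁻¹ ^ k = ((δ * t) ^ k / k.factorial)⁻¹ := by
    rw [inv_div, mul_pow, inv_pow]; field_simp
  rw [h2]
  exact inv_anti₀ (by positivity) this

/-- Luo's unit-sum convergence: Let `F` be a totally real number field of
degree `n` over `ℚ` and let `δ > 0`. The family indexed by the totally positive units `η` of
`𝓞 F`, with value `∏_{j : σⱼ(η) < 1} σⱼ(η)^δ` (the product over the real embeddings `σⱼ` at
which `σⱼ(η) < 1`), is summable. -/
theorem summable_totally_positive_units_prod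
    (F : Type*) [Field F] [NumberField F]
    (htotallyReal : ∀ v : NumberField.InfinitePlace F, v.IsReal)
    (δ : ℝ) (hδ : 0 < δ) :
    Summable (fun η : {η : (𝓞 F)ˣ // ∀ σ : F →+* ℝ, 0 < σ ((η : 𝓞 F) : F)} =>
      ∏ σ : F →+* ℝ,
        if σ (((η : (𝓞 F)ˣ) : 𝓞 F) : F) < 1
          then (σ (((η : (𝓞 F)ˣ) : 𝓞 F) : F)) ^ δ
          else 1) := by
  classical
  let e := Equiv.ofBijective _ (aux_bij F htotallyReal)
  have he : ∀ (σ : F →+* ℝ) (x : F), e σ x = |σ x| := aux_place_eq F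
  let L : {η : (𝓞 F)ˣ // ∀ σ : F →+* ℝ, 0 < σ ((η : 𝓞 F) : F)} → Units.unitLattice F :=
    fun η => ⟨Units.logEmbedding F (Additive.ofMul η.1), ⟨Additive.ofMul η.1, trivial, rfl⟩⟩
  have hL : Function.Injective L := by
    intro x y hxy
    have h1 : Units.logEmbedding F (Additive.ofMul x.1) =
      Units.logEmbedding F (Additive.ofMul y.1) := congrArg Subtype.val hxy
    have h2 : Units.logEmbedding F (Additive.ofMul (x.1 / y.1)) = 0 := by
      rw [ofMul_div, map_sub, h1, sub_self]
    rw [Units.dirichletUnitTheorem.logEmbedding_eq_zero_iff, Units.mem_torsion] at h2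
    obtain ⟨σ⟩ : Nonempty (F →+* ℝ) := ⟨e.symm (Classical.arbitrary _)⟩
    have h3 := h2 (e σ)
    have h4 : (((x.1 / y.1 : (𝓞 F)ˣ) : 𝓞 F) : F) * ((y.1 : 𝓞 F) : F) = ((x.1 : 𝓞 F) : F) := by
      rw [← map_mul, ← Units.val_mul, div_mul_cancel]
    have h5 : e σ ((x.1 : 𝓞 F) : F) = e σ ((y.1 : 𝓞 F) : F) := by
      rw [← h4, map_mul, h3, one_mul]
    rw [he, he, abs_of_pos (x.2 σ), abs_of_pos (y.2 σ)] at h5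
    apply Subtype.ext
    apply Units.ext
    exact RingOfIntegers.ext (σ.injective h5)
  set k := Module.finrank ℤ (Units.unitLattice F) + 1 with hk
  have hs : Summable fun z : Units.unitLattice F => (k.factorial / δ ^ k) * ‖z‖⁻¹ ^ k :=
    (ZLattice.summable_norm_pow_inv _ k (by omega)).mul_left _
  refine Summable.of_norm_bounded_eventually (hs.comp_injective hL) ?_
  have hfin : {η | L η = 0}.Finite :=
    Set.Subsingleton.finite fun x hx y hy => hL (hx.trans hy.symm)
  filter_upwards [hfin.compl_mem_cofinite] with η hη
  have hpos : 0 < ‖L η‖ := norm_pos_iff.mpr hη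
  have hval : (∏ σ : F →+* ℝ, if σ (((η : (𝓞 F)ˣ) : 𝓞 F) : F) < 1
          then (σ (((η : (𝓞 F)ˣ) : 𝓞 F) : F)) ^ δ else 1) =
      Real.exp (-δ * ∑ w : InfinitePlace F, max (-Real.log (w ((η.1 : 𝓞 F) : F))) 0) := by
    rw [Finset.mul_sum, Real.exp_sum, ← e.prod_comp]
    refine Finset.prod_congr rfl fun σ _ => ?_
    rw [he, abs_of_pos (η.2 σ), aux_term _ _ (η.2 σ) hδ]
  have hsum : ∑ w : InfinitePlace F, Real.log (w ((η.1 : 𝓞 F) : F)) = 0 := by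
    have := Units.sum_mult_mul_log η.1
    simpa [fun w => (htotallyReal w).mult_eq_one] using this
  have hle : ‖L η‖ ≤ ∑ w : InfinitePlace F, max (-Real.log (w ((η.1 : 𝓞 F) : F))) 0 := by
    change ‖Units.logEmbedding F (Additive.ofMul η.1)‖ ≤ _
    rw [pi_norm_le_iff_of_nonneg (Finset.sum_nonneg fun i _ => le_max_right _ _)]
    intro w
    rw [Units.dirichletUnitTheorem.logEmbedding_component, (htotallyReal w.1).mult_eq_one,
      Nat.cast_one, one_mul, Real.norm_eq_abs]
    exact aux_sum _ hsum w.1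
  rw [hval, Real.norm_eq_abs, Real.abs_exp]
  refine le_trans ?_ (aux_exp _ δ k hpos hδ)
  rw [Real.exp_le_exp]
  nlinarith
end

section
/- Let F be a totally real number field with ring of integers O_F and let δ ∈ (0, 1/2). There exists a constant C > 0 depending only on F and δ such that for all nonzero integral ideals 𝔪 and 𝔫 of O_F and every nonzero prime ideal 𝔮 of O_F, one has ∑_{𝔠} N(gcd(𝔪, 𝔫, 𝔠))^{1/2} · N(𝔠)^{−(3/2−δ)} ≤ C · N(gcd(𝔪, 𝔫, 𝔮))^{1/2} · N(𝔮)^{−(3/2−δ)} · N(gcd(𝔪, 𝔫))^δ, where the sum ranges over all nonzero integral ideals 𝔠 contained in 𝔮. -/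
open NumberField

/-- Dyadic induction. -/
lemma aux_dyadic {ι : Type*} (N : ι → ℕ) (hN : ∀ i, 1 ≤ N i) (S : ℕ → Finset ι)
    (hS : ∀ n i, i ∈ S n ↔ N i ≤ n) (A : ℝ) (hA : ∀ n, ((S n).card : ℝ) ≤ A * n)
    (t : ℝ) (ht : 0 ≤ t) (φ : ℕ → ℝ) (h0 : 0 ≤ φ 0)
    (hφ : ∀ n : ℕ, 1 ≤ n → φ (n / 2) + A * n * ((n : ℝ) / 2) ^ (-t) ≤ φ n) (n : ℕ) :
    ∑ i ∈ S n, (N i : ℝ) ^ (-t) ≤ φ n := by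
  classical
  induction n using Nat.strong_induction_on with
  | _ n ih =>
    rcases Nat.eq_zero_or_pos n with rfl | hn
    · have : S 0 = ∅ := by
        ext i; have := hN i; simp [hS]; omega
      simpa [this] using h0
    · have hsub : S (n / 2) ⊆ S n := by
        intro i; simp only [hS]; omega
      rw [← Finset.sum_sdiff hsub]
      have h1 := ih (n / 2) (by omega)
      have hn' : (0 : ℝ) < n := by exact_mod_cast hn
      have h2 : ∑ i ∈ S n \ S (n / 2), (N i : ℝ) ^ (-t) ≤ A * n * ((n : ℝ) / 2) ^ (-t) := by
        calc _ ≤ ∑ i ∈ S n \ S (n / 2), ((n : ℝ) / 2) ^ (-t) := by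
              refine Finset.sum_le_sum fun i hi => ?_
              simp only [Finset.mem_sdiff, hS] at hi
              refine Real.rpow_le_rpow_of_nonpos (by positivity) ?_ (by linarith)
              have : n ≤ 2 * N i := by omega
              have : (n : ℝ) ≤ 2 * N i := by exact_mod_cast this
              linarith
          _ = ((S n \ S (n / 2)).card : ℝ) * ((n : ℝ) / 2) ^ (-t) := by simp
          _ ≤ _ := by
              refine mul_le_mul_of_nonneg_right ?_ (by positivity)
              refine le_trans ?_ (hA n)
              exact_mod_cast Finset.card_le_card Finset.sdiff_subset
      linarith [hφ n hn]

lemma aux_small {ι : Type*} (N : ι → ℕ) (hN : ∀ i, 1 ≤ N i) (S : ℕ → Finset ι)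
    (hS : ∀ n i, i ∈ S n ↔ N i ≤ n) (A : ℝ) (hA0 : 0 ≤ A) (hA : ∀ n, ((S n).card : ℝ) ≤ A * n)
    (δ : ℝ) (h0 : 0 < δ) (h1 : δ < 1) :
    ∃ K : ℝ, 0 ≤ K ∧ ∀ n : ℕ, ∑ i ∈ S n, (N i : ℝ) ^ (-(1 - δ)) ≤ K * (n : ℝ) ^ δ := by
  have h2 : (2 : ℝ)⁻¹ ^ δ < 1 := Real.rpow_lt_one (by norm_num) (by norm_num) h0
  refine ⟨A * (2 : ℝ)⁻¹ ^ (-(1 - δ)) / (1 - (2 : ℝ)⁻¹ ^ δ),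
    div_nonneg (by positivity) (by linarith), ?_⟩
  set K := A * (2 : ℝ)⁻¹ ^ (-(1 - δ)) / (1 - (2 : ℝ)⁻¹ ^ δ) with hK
  have hK0 : 0 ≤ K := div_nonneg (by positivity) (by linarith)
  refine aux_dyadic N hN S hS A hA (1 - δ) (by linarith) (fun n => K * (n : ℝ) ^ δ)
    (by positivity) ?_
  intro n hn
  have hn' : (0 : ℝ) < n := by exact_mod_cast hn
  have e1 : ((n / 2 : ℕ) : ℝ) ^ δ ≤ (n : ℝ) ^ δ * (2 : ℝ)⁻¹ ^ δ := by
    rw [← Real.mul_rpow hn'.le (by norm_num)]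
    refine Real.rpow_le_rpow (by positivity) ?_ h0.le
    have : ((n / 2 : ℕ) : ℝ) ≤ (n : ℝ) / 2 := by exact_mod_cast Nat.cast_div_le
    linarith
  have e2 : A * n * ((n : ℝ) / 2) ^ (-(1 - δ)) = A * (2 : ℝ)⁻¹ ^ (-(1 - δ)) * (n : ℝ) ^ δ := by
    rw [div_eq_mul_inv, Real.mul_rpow hn'.le (by norm_num)]
    have : (n : ℝ) ^ δ = n * (n : ℝ) ^ (-(1 - δ)) := by
      rw [← Real.rpow_one_add' hn'.le (by linarith)]; congr 1; ring
    rw [this]; ring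
  have e3 : A * (2 : ℝ)⁻¹ ^ (-(1 - δ)) = K * (1 - (2 : ℝ)⁻¹ ^ δ) := by
    rw [hK, div_mul_cancel₀]; linarith
  rw [e2, e3]
  nlinarith [mul_le_mul_of_nonneg_left e1 hK0]

lemma aux_zeta {ι : Type*} (N : ι → ℕ) (hN : ∀ i, 1 ≤ N i) (S : ℕ → Finset ι)
    (hS : ∀ n i, i ∈ S n ↔ N i ≤ n) (A : ℝ) (hA0 : 0 ≤ A) (hA : ∀ n, ((S n).card : ℝ) ≤ A * n)
    (r : ℝ) (h0 : 0 < r) :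
    Summable (fun i => (N i : ℝ) ^ (-(1 + r))) := by
  classical
  have h2 : 1 < (2 : ℝ)⁻¹ ^ (-r) := by
    rw [Real.inv_rpow (by norm_num), Real.rpow_neg (by norm_num), inv_inv]
    exact Real.one_lt_rpow (by norm_num) h0
  set L := A * (2 : ℝ)⁻¹ ^ (-(1 + r)) / ((2 : ℝ)⁻¹ ^ (-r) - 1) with hL
  have hL0 : 0 ≤ L := div_nonneg (by positivity) (by linarith)
  set K := L + A * (2 : ℝ)⁻¹ ^ (-(1 + r)) with hK
  have hK0 : 0 ≤ K := by positivity
  have key := aux_dyadic N hN S hS A hA (1 + r) (by linarith) (fun n => if n = 0 then 0 else K - L * (n : ℝ) ^ (-r))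
    (by simp) ?_
  · refine summable_of_sum_le (c := K) (fun i => by positivity) fun u => ?_
    calc _ ≤ ∑ i ∈ S (u.sup N), (N i : ℝ) ^ (-(1 + r)) := by
          refine Finset.sum_le_sum_of_subset_of_nonneg ?_ fun i _ _ => by positivity
          intro i hi
          rw [hS]; exact Finset.le_sup hi
      _ ≤ _ := key _
      _ ≤ K := by
          have : 0 ≤ L * ((u.sup N : ℕ) : ℝ) ^ (-r) := by positivity
          split_ifs <;> linarith
  · intro n hn
    have hn' : (0 : ℝ) < n := by exact_mod_cast hn
    have e2 : A * n * ((n : ℝ) / 2) ^ (-(1 + r))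
        = A * (2 : ℝ)⁻¹ ^ (-(1 + r)) * (n : ℝ) ^ (-r) := by
      rw [div_eq_mul_inv, Real.mul_rpow hn'.le (by norm_num)]
      have : (n : ℝ) ^ (-r) = n * (n : ℝ) ^ (-(1 + r)) := by
        rw [← Real.rpow_one_add' hn'.le (by linarith)]; congr 1; ring
      rw [this]; ring
    rw [e2]
    rcases Nat.lt_or_ge n 2 with h | h
    · obtain rfl : n = 1 := by omega
      simp [hK]
    · have e1 : (n : ℝ) ^ (-r) * (2 : ℝ)⁻¹ ^ (-r) ≤ ((n / 2 : ℕ) : ℝ) ^ (-r) := by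
        rw [← Real.mul_rpow hn'.le (by norm_num)]
        have h1 : 0 < n / 2 := by omega
        refine Real.rpow_le_rpow_of_nonpos (by exact_mod_cast h1) ?_ (by linarith)
        have : ((n / 2 : ℕ) : ℝ) ≤ (n : ℝ) / 2 := by exact_mod_cast Nat.cast_div_le
        linarith
      have e3 : A * (2 : ℝ)⁻¹ ^ (-(1 + r)) = L * ((2 : ℝ)⁻¹ ^ (-r) - 1) := by
        rw [hL, div_mul_cancel₀]; linarith
      rw [e3, if_neg (by omega), if_neg (by omega)]
      nlinarith [mul_le_mul_of_nonneg_left e1 hL0]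

lemma aux_count (F : Type*) [Field F] [NumberField F] :
    ∃ (S : ℕ → Finset {I : Ideal (𝓞 F) // I ≠ ⊥}) (A : ℝ),
      (∀ n i, i ∈ S n ↔ Ideal.absNorm i.1 ≤ n) ∧ 0 ≤ A ∧ ∀ n, ((S n).card : ℝ) ≤ A * n := by
  classical
  have hfin (n : ℕ) : {I : Ideal (𝓞 F) | Ideal.absNorm I ≤ n}.Finite :=
    Ideal.finite_setOfPred_absNorm_le n
  have hfin' (n : ℕ) : {I : {I : Ideal (𝓞 F) // I ≠ ⊥} | Ideal.absNorm I.1 ≤ n}.Finite :=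
    (hfin n).preimage Subtype.val_injective.injOn
  obtain ⟨A, hA⟩ := ((NumberField.Ideal.tendsto_norm_le_div_atTop F).comp
    tendsto_natCast_atTop_atTop).bddAbove_range
  have hA' (n : ℕ) : (Nat.card {I : Ideal (𝓞 F) // Ideal.absNorm I ≤ n} : ℝ) / n ≤ A := by
    simpa using hA ⟨n, rfl⟩
  have hA0 : 0 ≤ A := by simpa using hA' 0
  refine ⟨fun n => (hfin' n).toFinset, A, fun n i => by simp, hA0, fun n => ?_⟩
  rcases Nat.eq_zero_or_pos n with rfl | hn
  · have : (hfin' 0).toFinset = ∅ := by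
      ext i; simpa [Ideal.absNorm_eq_zero_iff] using i.2
    change (((hfin' 0).toFinset.card : ℕ) : ℝ) ≤ _
    rw [this]; simp
  · have hn' : (0 : ℝ) < n := by exact_mod_cast hn
    refine le_trans ?_ ((div_le_iff₀ hn').1 (hA' n))
    have : (hfin' n).toFinset.card ≤ Nat.card {I : Ideal (𝓞 F) // Ideal.absNorm I ≤ n} := by
      rw [← Nat.card_eq_card_finite_toFinset (hfin' n)]
      have : Finite {I : Ideal (𝓞 F) // Ideal.absNorm I ≤ n} := hfin n
      refine Nat.card_le_card_of_injective (fun x => ⟨x.1.1, x.2⟩) ?_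
      intro x y h
      simpa [Subtype.ext_iff] using h
    exact_mod_cast this



/-- Trotabas, p. 228: Let `F` be a totally real number field with ring of
integers `𝓞 F` and let `δ ∈ (0, 1/2)`. There is a constant `C > 0` depending only on `F` and
`δ` such that for all nonzero integral ideals `𝔪, 𝔫` and every nonzero prime ideal `𝔮`,
`∑_{𝔠 ⊆ 𝔮, 𝔠 ≠ 0} N(𝔪+𝔫+𝔠)^(1/2) * N(𝔠)^(-(3/2-δ))
   ≤ C * N(𝔪+𝔫+𝔮)^(1/2) * N(𝔮)^(-(3/2-δ)) * N(𝔪+𝔫)^δ`,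
where the gcd of ideals is their sum. -/
theorem sum_over_ideals_in_q_gcd_bound
    (F : Type*) [Field F] [NumberField F]
    (htotallyReal : ∀ v : NumberField.InfinitePlace F, v.IsReal)
    (δ : ℝ) (hδ0 : 0 < δ) (hδ1 : δ < 1 / 2) :
    ∃ C > (0 : ℝ), ∀ 𝔪 𝔫 𝔮 : Ideal (𝓞 F), 𝔪 ≠ ⊥ → 𝔫 ≠ ⊥ → 𝔮.IsPrime → 𝔮 ≠ ⊥ →
      Summable (fun 𝔠 : {𝔠 : Ideal (𝓞 F) // 𝔠 ≠ ⊥ ∧ 𝔠 ≤ 𝔮} =>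
        (Ideal.absNorm (𝔪 + 𝔫 + (𝔠 : Ideal (𝓞 F))) : ℝ) ^ ((1 : ℝ) / 2) *
          (Ideal.absNorm (𝔠 : Ideal (𝓞 F)) : ℝ) ^ (-(3 / 2 - δ))) ∧
      (∑' 𝔠 : {𝔠 : Ideal (𝓞 F) // 𝔠 ≠ ⊥ ∧ 𝔠 ≤ 𝔮},
          (Ideal.absNorm (𝔪 + 𝔫 + (𝔠 : Ideal (𝓞 F))) : ℝ) ^ ((1 : ℝ) / 2) *
            (Ideal.absNorm (𝔠 : Ideal (𝓞 F)) : ℝ) ^ (-(3 / 2 - δ)))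
        ≤ C * (Ideal.absNorm (𝔪 + 𝔫 + 𝔮) : ℝ) ^ ((1 : ℝ) / 2) *
            (Ideal.absNorm 𝔮 : ℝ) ^ (-(3 / 2 - δ)) *
            (Ideal.absNorm (𝔪 + 𝔫) : ℝ) ^ δ := by
  obtain ⟨S, A, hS, hA0, hA⟩ := aux_count F
  set N : {I : Ideal (𝓞 F) // I ≠ ⊥} → ℕ := fun i => Ideal.absNorm i.1 with hNdef
  have hN : ∀ i, 1 ≤ N i := fun i => Nat.one_le_iff_ne_zero.2
    fun h => i.2 (Ideal.absNorm_eq_zero_iff.1 h)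
  obtain ⟨K, hK0, hK⟩ := aux_small N hN S hS A hA0 hA δ hδ0 (by linarith)
  have hZ := aux_zeta N hN S hS A hA0 hA (1 / 2 - δ) (by linarith)
  have hexp : -(1 + (1 / 2 - δ)) = -(3 / 2 - δ) := by ring
  rw [hexp] at hZ
  set Z := ∑' i, (N i : ℝ) ^ (-(3 / 2 - δ)) with hZdef
  have hZ0 : 0 ≤ Z := tsum_nonneg fun i => by positivity
  refine ⟨K * Z + 1, by positivity, ?_⟩
  intro 𝔪 𝔫 𝔮 hm hn hq hq0
  set g := 𝔪 + 𝔫 with hg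
  have hg0 : g ≠ ⊥ := by
    intro h
    exact hm (le_bot_iff.1 (h ▸ (le_sup_left : 𝔪 ≤ 𝔪 ⊔ 𝔫)))
  have hgN : Ideal.absNorm g ≠ 0 := fun h => hg0 (Ideal.absNorm_eq_zero_iff.1 h)
  set D := {i // i ∈ S (Ideal.absNorm g)} with hD
  set B : ℝ := (Ideal.absNorm (g + 𝔮) : ℝ) ^ ((1 : ℝ) / 2) *
    (Ideal.absNorm 𝔮 : ℝ) ^ (-(3 / 2 - δ)) with hB
  have hB0 : 0 ≤ B := by positivity
  let f : D × {I : Ideal (𝓞 F) // I ≠ ⊥} → ℝ := fun p =>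
    B * ((N p.1.1 : ℝ) ^ (-(1 - δ)) * (N p.2 : ℝ) ^ (-(3 / 2 - δ)))
  have hDs : Summable (fun d : D => (N d.1 : ℝ) ^ (-(1 - δ))) := Summable.of_finite
  have hps : Summable (fun p : D × {I : Ideal (𝓞 F) // I ≠ ⊥} =>
      (N p.1.1 : ℝ) ^ (-(1 - δ)) * (N p.2 : ℝ) ^ (-(3 / 2 - δ))) :=
    hDs.mul_of_nonneg hZ (fun _ => by positivity) (fun _ => by positivity)
  have hf : Summable f := hps.mul_left B
  have hfsum : ∑' p, f p ≤ B * (K * (Ideal.absNorm g : ℝ) ^ δ * Z) := by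
    rw [tsum_mul_left, ← hDs.tsum_mul_tsum hZ hps]
    refine mul_le_mul_of_nonneg_left (mul_le_mul_of_nonneg_right ?_ hZ0) hB0
    rw [tsum_fintype, Finset.sum_coe_sort (S (Ideal.absNorm g))
      (fun i => (N i : ℝ) ^ (-(1 - δ)))]
    exact hK _
  have hex : ∀ 𝔠 : {𝔠 : Ideal (𝓞 F) // 𝔠 ≠ ⊥ ∧ 𝔠 ≤ 𝔮},
      ∃ p : D × {I : Ideal (𝓞 F) // I ≠ ⊥}, 𝔠.1 = 𝔮 * (p.1.1.1 * p.2.1) ∧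
        (Ideal.absNorm (g + (𝔠 : Ideal (𝓞 F))) : ℝ) ^ ((1 : ℝ) / 2) *
          (Ideal.absNorm (𝔠 : Ideal (𝓞 F)) : ℝ) ^ (-(3 / 2 - δ)) ≤ f p := by
    rintro ⟨𝔠, hc0, hcq⟩
    obtain ⟨b, rfl⟩ := Ideal.dvd_iff_le.2 hcq
    have hb0 : b ≠ ⊥ := by
      rintro rfl; simp at hc0
    obtain ⟨b', hb'⟩ := Ideal.dvd_iff_le.2 (le_sup_right : b ≤ g ⊔ b)
    have hd0 : g ⊔ b ≠ ⊥ := by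
      intro h
      exact hb0 (le_bot_iff.1 (h ▸ (le_sup_right : b ≤ g ⊔ b)))
    have hb'0 : b' ≠ ⊥ := by
      rintro rfl; simp at hb'; exact hb0 hb'
    have hdm : (⟨g ⊔ b, hd0⟩ : {I : Ideal (𝓞 F) // I ≠ ⊥}) ∈ S (Ideal.absNorm g) := by
      rw [hS]
      exact Nat.le_of_dvd (Nat.pos_of_ne_zero hgN) (Ideal.absNorm_dvd_absNorm_of_le le_sup_left)
    refine ⟨⟨⟨⟨g ⊔ b, hd0⟩, hdm⟩, ⟨b', hb'0⟩⟩, by simp only; rw [← hb'], ?_⟩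
    have hdpos : (0 : ℝ) < Ideal.absNorm (g ⊔ b) := by
      exact_mod_cast Nat.pos_of_ne_zero fun h => hd0 (Ideal.absNorm_eq_zero_iff.1 h)
    have hle : (g + 𝔮) * (g ⊔ b) ≤ g + 𝔮 * b := by
      change (g + 𝔮) * (g + b) ≤ g + 𝔮 * b
      have : (g + 𝔮) * (g + b) = (g * (g + b) + 𝔮 * g) + 𝔮 * b := by ring
      rw [this]
      exact sup_le_sup (sup_le Ideal.mul_le_left Ideal.mul_le_right) le_rfl
    have hne : (g + 𝔮) * (g ⊔ b) ≠ ⊥ := by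
      refine mul_ne_zero (fun h => ?_) hd0
      have h3 : 𝔮 ≤ g + 𝔮 := le_sup_right
      rw [h] at h3
      exact hq0 (le_bot_iff.1 h3)
    have hNle : (Ideal.absNorm (g + 𝔮 * b) : ℝ) ≤
        Ideal.absNorm (g + 𝔮) * Ideal.absNorm (g ⊔ b) := by
      rw [← Nat.cast_mul, ← map_mul]
      exact_mod_cast Nat.le_of_dvd
        (Nat.pos_of_ne_zero fun h => hne (Ideal.absNorm_eq_zero_iff.1 h))
        (Ideal.absNorm_dvd_absNorm_of_le hle)
    have hNb : (Ideal.absNorm (𝔮 * b) : ℝ) =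
        Ideal.absNorm 𝔮 * (Ideal.absNorm (g ⊔ b) * Ideal.absNorm b') := by
      rw [map_mul]; nth_rewrite 1 [hb']; rw [map_mul]; push_cast; ring
    simp only [f, hNdef, hB]
    rw [hNb, Real.mul_rpow (by positivity) (by positivity),
      Real.mul_rpow (by positivity) (by positivity)]
    have h1 : (Ideal.absNorm (g + 𝔮 * b) : ℝ) ^ ((1 : ℝ) / 2) ≤
        (Ideal.absNorm (g + 𝔮) : ℝ) ^ ((1 : ℝ) / 2) *
          (Ideal.absNorm (g ⊔ b) : ℝ) ^ ((1 : ℝ) / 2) := by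
      rw [← Real.mul_rpow (by positivity) (by positivity)]
      exact Real.rpow_le_rpow (by positivity) hNle (by norm_num)
    have h2 : (Ideal.absNorm (g ⊔ b) : ℝ) ^ (-(1 - δ)) =
        (Ideal.absNorm (g ⊔ b) : ℝ) ^ ((1 : ℝ) / 2) *
          (Ideal.absNorm (g ⊔ b) : ℝ) ^ (-(3 / 2 - δ)) := by
      rw [← Real.rpow_add hdpos]; congr 1; ring
    rw [h2]
    refine (mul_le_mul_of_nonneg_right h1 (by positivity)).trans (le_of_eq ?_)
    ring
  choose p hp1 hp2 using hex
  have hinj : Function.Injective p := by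
    intro x y h
    apply Subtype.ext
    rw [hp1 x, hp1 y, h]
  have hsum : Summable (fun 𝔠 : {𝔠 : Ideal (𝓞 F) // 𝔠 ≠ ⊥ ∧ 𝔠 ≤ 𝔮} =>
        (Ideal.absNorm (g + (𝔠 : Ideal (𝓞 F))) : ℝ) ^ ((1 : ℝ) / 2) *
          (Ideal.absNorm (𝔠 : Ideal (𝓞 F)) : ℝ) ^ (-(3 / 2 - δ))) :=
    Summable.of_nonneg_of_le (fun _ => by positivity) hp2 (hf.comp_injective hinj)
  refine ⟨hsum, ?_⟩
  refine (hsum.tsum_le_tsum_of_inj p hinj (fun c _ => ?_) hp2 hf).trans (hfsum.trans ?_)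
  · simp only [f]; positivity
  · have : 0 ≤ B * (Ideal.absNorm g : ℝ) ^ δ := by positivity
    calc _ = (K * Z) * (B * (Ideal.absNorm g : ℝ) ^ δ) := by ring
      _ ≤ (K * Z + 1) * (B * (Ideal.absNorm g : ℝ) ^ δ) :=
          mul_le_mul_of_nonneg_right (by linarith) this
      _ = _ := by rw [hB]; ring
end

section
/- Let Λ : ℂ → ℂ be an entire function satisfying the functional equation Λ(s) = Λ(1 − s) for all s ∈ ℂ. Let G be a function holomorphic on an open set containing the strip {u ∈ ℂ : |Re(u)| ≤ 3/2} and bounded there, with G(−u) = G(u) and G(0) = 1. Fix s₀ ∈ ℂ and X > 0, and assume: (i) for σ = 3/2 and σ = −3/2, the functions t ↦ Λ(s₀ + σ + it)·G(σ + it)/(σ + it) and t ↦ Λ(1 − s₀ + σ + it)·G(σ + it)/(σ + it) are Lebesgue integrable on ℝ; (ii) sup_{σ ∈ [−3/2, 3/2]} |Λ(s₀ + σ + it)·G(σ + it)| → 0 as |t| → ∞. Then Λ(s₀) = I(s₀, X) + I(1 − s₀, X^{−1}), where for s ∈ ℂ and Y > 0 one defines I(s, Y) = (1/(2π)) ∫_ℝ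 Y^{3/2+it} · Λ(s + 3/2 + it) · G(3/2 + it)/(3/2 + it) dt. -/
open Complex MeasureTheory Filter

/-- The vertical-line integral
`I(s, Y) = (1/(2πi)) ∫_{Re u = 3/2} Y^u Λ(s+u) G(u) du/u
         = (1/(2π)) ∫_ℝ Y^{3/2+it} Λ(s + 3/2 + it) G(3/2+it)/(3/2+it) dt`. -/
noncomputable def verticalLineIntegral (Λ G : ℂ → ℂ) (s : ℂ) (Y : ℝ) : ℂ :=
  (1 / (2 * Real.pi) : ℂ) * ∫ t : ℝ,
    (Y : ℂ) ^ ((3 : ℂ) / 2 + t * Complex.I) *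
      Λ (s + 3 / 2 + t * Complex.I) *
      G ((3 : ℂ) / 2 + t * Complex.I) / ((3 : ℂ) / 2 + t * Complex.I)

lemma aux_contour (F : ℂ → ℂ) (U : Set ℂ) (hU : IsOpen U) (c : ℝ) (hc : 0 < c)
    (hUs : {u : ℂ | |u.re| ≤ c} ⊆ U) (hF : DifferentiableOn ℂ F U)
    (h1 : Integrable (fun t : ℝ => F (c + t * Complex.I) / (c + t * Complex.I)))
    (h2 : Integrable (fun t : ℝ => F ((-c : ℝ) + t * Complex.I) / ((-c : ℝ) + t * Complex.I)))
    (C : ℝ) (hC : ∀ᶠ t : ℝ in cocompact ℝ, ∀ x ∈ Set.Icc (-c) c, ‖F (x + t * Complex.I)‖ ≤ C) :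
    (∫ t : ℝ, F (c + t * Complex.I) / (c + t * Complex.I)) -
      (∫ t : ℝ, F ((-c : ℝ) + t * Complex.I) / ((-c : ℝ) + t * Complex.I)) = 2 * Real.pi * F 0 := by
  set g := dslope F 0 with hg
  have h0U : (0 : ℂ) ∈ U := hUs (by simp [hc.le])
  have hgd : DifferentiableOn ℂ g U :=
    (Complex.differentiableOn_dslope (hU.mem_nhds h0U)).2 hF
  have hgv : ∀ u : ℂ, u ≠ 0 → g u = (F u - F 0) / u := by
    intro u hu
    rw [hg, dslope_of_ne _ hu, slope_def_field, sub_zero]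
  -- horizontal sides
  have hbound : ∀ᶠ t : ℝ in cocompact ℝ, ∀ x ∈ Set.Icc (-c) c,
      ‖g (x + t * Complex.I)‖ ≤ (C + ‖F 0‖) * |t|⁻¹ := by
    filter_upwards [hC, (isCompact_singleton (x := (0:ℝ))).compl_mem_cocompact] with t ht ht0 x hx
    have ht0 : t ≠ 0 := ht0
    have him : |t| ≤ ‖(x + t * Complex.I : ℂ)‖ := by
      simpa using Complex.abs_im_le_norm (x + t * Complex.I)
    have htp : 0 < |t| := abs_pos.2 ht0
    rw [hgv _ (norm_pos_iff.1 (htp.trans_le him)), norm_div, div_eq_mul_inv]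
    have := ht x hx
    have h3 := norm_sub_le (F (x + t * Complex.I)) (F 0)
    have : 0 ≤ C := (norm_nonneg _).trans this
    gcongr
    linarith
  have hhor : Tendsto (fun t : ℝ => ∫ x in (-c)..c, g (x + t * Complex.I)) (cocompact ℝ) (nhds 0) := by
    have hlim : Tendsto (fun t : ℝ => (C + ‖F 0‖) * |t|⁻¹ * |c - (-c)|) (cocompact ℝ) (nhds 0) := by
      have : Tendsto (fun t : ℝ => |t|⁻¹) (cocompact ℝ) (nhds 0) :=
        tendsto_inv_atTop_zero.comp (tendsto_norm_cocompact_atTop (E := ℝ))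
      simpa using (this.const_mul (C + ‖F 0‖)).mul_const (|c - (-c)|)
    refine squeeze_zero_norm' ?_ hlim
    filter_upwards [hbound] with t ht
    apply intervalIntegral.norm_integral_le_of_norm_le_const
    intro x hx
    rw [Set.uIoc_of_le (by linarith)] at hx
    exact ht x ⟨hx.1.le, hx.2⟩
  have hcc : cocompact ℝ = atBot ⊔ atTop := cocompact_eq_atBot_atTop
  rw [hcc] at hhor
  have htop := hhor.mono_left le_sup_right
  have hbot := (hhor.mono_left le_sup_left).comp tendsto_neg_atTop_atBot
  have hne : ∀ (a : ℝ), a ≠ 0 → ∀ t : ℝ, (a + t * Complex.I : ℂ) ≠ 0 := by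
    intro a ha t h
    apply ha
    simpa using congrArg Complex.re h
  have hcn : -c ≠ 0 := neg_ne_zero.2 hc.ne'
  -- vertical continuity
  have hcont : ∀ a : ℝ, |a| ≤ c → Continuous (fun t : ℝ => g (a + t * Complex.I)) := by
    intro a ha
    refine hgd.continuousOn.comp_continuous (by fun_prop) ?_
    intro t
    apply hUs
    simpa using ha
  have hca : |c| ≤ c := by rw [abs_of_pos hc]
  have hca' : |-c| ≤ c := by rw [abs_neg, abs_of_pos hc]
  have hrect : ∀ T : ℝ, (∫ t in (-T)..T, (g (c + t * Complex.I) - g ((-c : ℝ) + t * Complex.I))) =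
      Complex.I * ((∫ x in (-c)..c, g (x + (-T : ℝ) * Complex.I)) -
        ∫ x in (-c)..c, g (x + T * Complex.I)) := by
    intro T
    have := Complex.integral_boundary_rect_eq_zero_of_differentiableOn g
      (⟨-c, -T⟩) (⟨c, T⟩) (hgd.mono (by
        intro u hu
        apply hUs
        rw [Complex.mem_reProdIm] at hu
        have h := hu.1
        simp only [Set.uIcc_of_le (show -c ≤ c by linarith)] at h
        exact abs_le.2 h))
    simp only [smul_eq_mul] at this
    rw [intervalIntegral.integral_sub ((hcont c hca).intervalIntegrable _ _)
      ((hcont (-c) hca').intervalIntegrable _ _)]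
    linear_combination (-Complex.I) * this +
      ((∫ t in (-T)..T, g (c + t * Complex.I)) - ∫ t in (-T)..T, g ((-c:ℝ) + t * Complex.I)) * Complex.I_sq
  have hlim0 : Tendsto (fun T : ℝ => ∫ t in (-T)..T,
      (g (c + t * Complex.I) - g ((-c : ℝ) + t * Complex.I))) atTop (nhds 0) := by
    simp_rw [hrect]
    simpa using (hbot.sub htop).const_mul Complex.I
  -- pointwise
  set k : ℝ → ℝ := fun t => 2 * c⁻¹ * (1 + (c⁻¹ * t) ^ 2)⁻¹ with hk
  have hki : Integrable k :=
    (integrable_inv_one_add_sq.comp_mul_left' (inv_ne_zero hc.ne')).const_mul _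
  have hkint : ∫ t, k t = 2 * Real.pi := by
    rw [hk, integral_const_mul, Measure.integral_comp_mul_left (fun x : ℝ => (1 + x ^ 2)⁻¹),
      integral_univ_inv_one_add_sq]
    simp only [inv_inv, abs_of_pos hc, smul_eq_mul]
    field_simp
  have hkC : Integrable (fun t => (k t : ℂ) * F 0) := (hki.ofReal).mul_const _
  have hpt : ∀ t : ℝ, g (c + t * Complex.I) - g ((-c : ℝ) + t * Complex.I) =
      F (c + t * Complex.I) / (c + t * Complex.I) -
        F ((-c : ℝ) + t * Complex.I) / ((-c : ℝ) + t * Complex.I) - (k t : ℂ) * F 0 := by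
    intro t
    have e1 := hne c hc.ne' t
    have e2 := hne (-c) hcn t
    rw [hgv _ e1, hgv _ e2]
    have hkt : (k t : ℂ) = 1 / (c + t * Complex.I) - 1 / ((-c : ℝ) + t * Complex.I) := by
      have e3 : (c : ℂ) ≠ 0 := by exact_mod_cast hc.ne'
      have e4 : (c : ℂ) ^ 2 + t ^ 2 ≠ 0 := by
        have : c ^ 2 + t ^ 2 ≠ 0 := by positivity
        exact_mod_cast this
      have e5 : (c + t * Complex.I : ℂ) * ((-c : ℝ) + t * Complex.I) = -((c : ℂ) ^ 2 + t ^ 2) := by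
        push_cast
        linear_combination (t : ℂ) ^ 2 * Complex.I_sq
      have e6 : (k t : ℂ) = 2 * c / ((c : ℂ) ^ 2 + t ^ 2) := by
        have : k t = 2 * c / (c ^ 2 + t ^ 2) := by
          simp only [hk]
          field_simp
        rw [this]
        push_cast
        rfl
      rw [e6, div_sub_div _ _ e1 e2, e5, div_neg, ← neg_div]
      congr 1
      push_cast
      ring
    rw [hkt]
    ring
  have hI : Integrable (fun t : ℝ => g (c + t * Complex.I) - g ((-c : ℝ) + t * Complex.I)) := by
    simp_rw [hpt]
    exact (h1.sub h2).sub hkC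
  have hl2 := intervalIntegral_tendsto_integral hI tendsto_neg_atTop_atBot tendsto_id
  have hz := tendsto_nhds_unique hl2 hlim0
  simp_rw [hpt] at hz
  have h12 : Integrable (fun t : ℝ => F (c + t * Complex.I) / (c + t * Complex.I) -
      F ((-c : ℝ) + t * Complex.I) / ((-c : ℝ) + t * Complex.I)) := h1.sub h2
  rw [integral_sub h12 hkC, integral_sub h1 h2, integral_mul_const, integral_complex_ofReal, hkint] at hz
  push_cast at hz ⊢
  linear_combination hz

/-- approximate functional equation, contour-shift identity: if `Λ` is
entire with `Λ(s) = Λ(1-s)`, `G` is holomorphic and bounded on an open set containing the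
strip `|Re u| ≤ 3/2` with `G(-u) = G(u)` and `G(0) = 1`, and the stated integrability and
decay conditions hold, then `Λ(s₀) = I(s₀, X) + I(1-s₀, X⁻¹)`. -/
theorem approx_functional_equation_contour_identity
    (Λ : ℂ → ℂ) (hΛ : Differentiable ℂ Λ) (hfe : ∀ s : ℂ, Λ s = Λ (1 - s))
    (G : ℂ → ℂ) (U : Set ℂ) (hUopen : IsOpen U)
    (hUstrip : {u : ℂ | |u.re| ≤ 3 / 2} ⊆ U)
    (hGhol : DifferentiableOn ℂ G U)
    (hGbdd : ∃ M : ℝ, ∀ u ∈ U, ‖G u‖ ≤ M)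
    (hGeven : ∀ u : ℂ, G (-u) = G u) (hG0 : G 0 = 1)
    (s₀ : ℂ) (X : ℝ) (hX : 0 < X)
    (hint : ∀ σ : ℝ, σ = 3 / 2 ∨ σ = -(3 / 2) →
      Integrable (fun t : ℝ =>
        Λ (s₀ + σ + t * Complex.I) * G (σ + t * Complex.I) / (σ + t * Complex.I)) ∧
      Integrable (fun t : ℝ =>
        Λ (1 - s₀ + σ + t * Complex.I) * G (σ + t * Complex.I) / (σ + t * Complex.I)))
    (hdecay : Tendsto
      (fun t : ℝ => ⨆ σ ∈ Set.Icc (-(3 / 2) : ℝ) (3 / 2),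
        ‖Λ (s₀ + σ + t * Complex.I) * G (σ + t * Complex.I)‖)
      (cocompact ℝ) (nhds 0)) :
    Λ s₀ = verticalLineIntegral Λ G s₀ X +
      verticalLineIntegral Λ G (1 - s₀) X⁻¹ := by
  have hXC : (X : ℂ) ≠ 0 := by exact_mod_cast hX.ne'
  have hnX : ∀ σ t : ℝ, ‖(X : ℂ) ^ (σ + t * Complex.I : ℂ)‖ = X ^ σ := by
    intro σ t
    rw [Complex.norm_cpow_eq_rpow_re_of_pos hX]
    simp
  set F : ℂ → ℂ := fun u => (X : ℂ) ^ u * (Λ (s₀ + u) * G u) with hFdef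
  have hF : DifferentiableOn ℂ F U := by
    have hx : Differentiable ℂ (fun u : ℂ => (X : ℂ) ^ u) :=
      differentiable_id.const_cpow (Or.inl hXC)
    have hl : Differentiable ℂ (fun u : ℂ => Λ (s₀ + u)) := hΛ.comp (by fun_prop)
    exact hx.differentiableOn.mul (hl.differentiableOn.mul hGhol)
  have hFi : ∀ σ : ℝ, σ = 3 / 2 ∨ σ = -(3 / 2) →
      Integrable (fun t : ℝ => F (σ + t * Complex.I) / (σ + t * Complex.I)) := by
    intro σ hσ
    have h := (hint σ hσ).1
    have hm : Continuous (fun t : ℝ => (X : ℂ) ^ (σ + t * Complex.I : ℂ)) := by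
      have hx : Differentiable ℂ (fun u : ℂ => (X : ℂ) ^ u) :=
        differentiable_id.const_cpow (Or.inl hXC)
      exact hx.continuous.comp (by fun_prop)
    have := h.bdd_mul (c := X ^ σ) hm.aestronglyMeasurable
      (Eventually.of_forall fun t => (hnX σ t).le)
    refine this.congr (Eventually.of_forall fun t => ?_)
    simp only [hFdef, add_assoc]
    ring
  -- decay
  obtain ⟨K, hK⟩ : ∃ K : ℝ, ∀ σ ∈ Set.Icc (-(3 / 2) : ℝ) (3 / 2), ‖X ^ σ‖ ≤ K :=
    isCompact_Icc.exists_bound_of_continuousOn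
      (Real.continuous_const_rpow hX.ne').continuousOn
  have hC : ∀ᶠ t : ℝ in cocompact ℝ, ∀ x ∈ Set.Icc (-(3 / 2) : ℝ) (3 / 2),
      ‖F (x + t * Complex.I)‖ ≤ K * 1 := by
    filter_upwards [hdecay.eventually (gt_mem_nhds (zero_lt_one))] with t ht x hx
    have hcont : ContinuousOn (fun σ : ℝ => Λ (s₀ + σ + t * Complex.I) * G (σ + t * Complex.I))
        (Set.Icc (-(3 / 2) : ℝ) (3 / 2)) := by
      apply ContinuousOn.mul
      · exact (hΛ.continuous.comp (by fun_prop)).continuousOn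
      · refine hGhol.continuousOn.comp (by fun_prop) ?_
        intro σ hσ
        apply hUstrip
        simpa using abs_le.2 hσ
    obtain ⟨B, hB⟩ := isCompact_Icc.exists_bound_of_continuousOn hcont
    have hB0 : 0 ≤ B := (norm_nonneg _).trans (hB x hx)
    have hbdd : BddAbove (Set.range fun σ : ℝ => ⨆ _ : σ ∈ Set.Icc (-(3 / 2) : ℝ) (3 / 2),
        ‖Λ (s₀ + σ + t * Complex.I) * G (σ + t * Complex.I)‖) := by
      refine ⟨B, ?_⟩
      rintro _ ⟨σ, rfl⟩
      exact Real.iSup_le (fun h => hB σ h) hB0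
    have h1 := le_ciSup hbdd x
    simp only [ciSup_pos hx] at h1
    have h2 : ‖Λ (s₀ + x + t * Complex.I) * G (x + t * Complex.I)‖ ≤ 1 := h1.trans ht.le
    rw [add_assoc] at h2
    simp only [hFdef]
    rw [norm_mul, hnX]
    have h3 := (le_abs_self _).trans (hK x hx)
    have : 0 ≤ K := (norm_nonneg _).trans (hK x hx)
    gcongr
  have key := aux_contour F U hUopen (3 / 2) (by norm_num) hUstrip hF
    (hFi _ (Or.inl rfl)) (hFi _ (Or.inr rfl)) (K * 1) hC
  have hF0 : F 0 = Λ s₀ := by simp [hFdef, hG0]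
  rw [hF0, ← integral_neg_eq_self (fun t : ℝ => F ((-(3 / 2) : ℝ) + t * Complex.I) / _)] at key
  unfold verticalLineIntegral
  have E1 : (∫ t : ℝ, (X : ℂ) ^ ((3 : ℂ) / 2 + t * Complex.I) *
      Λ (s₀ + 3 / 2 + t * Complex.I) *
      G ((3 : ℂ) / 2 + t * Complex.I) / ((3 : ℂ) / 2 + t * Complex.I)) =
      ∫ t : ℝ, F ((3 / 2 : ℝ) + t * Complex.I) / ((3 / 2 : ℝ) + t * Complex.I) := by
    congr 1
    ext t
    simp only [hFdef]
    push_cast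
    rw [add_assoc, mul_assoc]
  have E2 : (∫ t : ℝ, ((X⁻¹ : ℝ) : ℂ) ^ ((3 : ℂ) / 2 + t * Complex.I) *
      Λ (1 - s₀ + 3 / 2 + t * Complex.I) *
      G ((3 : ℂ) / 2 + t * Complex.I) / ((3 : ℂ) / 2 + t * Complex.I)) =
      -∫ t : ℝ, F ((-(3 / 2) : ℝ) + (-t : ℝ) * Complex.I) /
        ((-(3 / 2) : ℝ) + (-t : ℝ) * Complex.I) := by
    rw [← integral_neg]
    congr 1
    ext t
    have e : (((-(3 / 2) : ℝ) : ℂ) + (-t : ℝ) * Complex.I) = -((3 : ℂ) / 2 + t * Complex.I) := by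
      push_cast
      ring
    rw [e]
    simp only [hFdef]
    rw [hGeven, hfe (s₀ + _), Complex.cpow_neg, Complex.ofReal_inv, Complex.inv_cpow, div_neg, neg_neg,
      mul_assoc]
    · congr 4
      ring
    · rw [Complex.arg_ofReal_of_nonneg hX.le]
      exact Real.pi_pos.ne
  rw [E1, E2, ← mul_add, ← sub_eq_add_neg, key]
  have : (Real.pi : ℂ) ≠ 0 := by exact_mod_cast Real.pi_ne_zero
  field_simp
end
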